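/- arXiv:1507.06392 — 3 statements merged into one kernel-verified Lean document; each statement's English description precedes it below -/
import Mathlib

section
/- Let M be a finite-dimensional right A-module such that dim_k M e_v ≤ 1 for every vertex v. Then the image of every A-module endomorphism f of M is a direct summand of M. In particular, if M is indecomposable, then every A-module endomorphism of M is either zero or an automorphism, and End_A M ≅ k. -/
/-!
STATEMENT 0.
Work over an algebraically closed field `k` of characteristic zero. `A` is a basic
finite-dimensional `k`-algebra with a complete set `{e v}` of pairwise orthogonal primitive
idempotents. A right `A`-module is formalized as a module over `Aᵐᵒᵖ`. For a
finite-dimensional right `A`-module `M` with `dim_k (M • e v) ≤ 1` for every vertex `v`,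
the image of every `A`-module endomorphism of `M` is a direct summand; in particular if `M`
is indecomposable every endomorphism is zero or an automorphism and `End_A M ≅ k`.
-/

open MulOpposite

/-- The `k`-linear endomorphism of a right `A`-module `M` given by right multiplication
by `a : A`. -/
noncomputable def rightMulLin (k : Type) [Field k] (A : Type) [Ring A] [Algebra k A]
    (M : Type) [AddCommGroup M] [Module k M] [Module Aᵐᵒᵖ M] [SMulCommClass Aᵐᵒᵖ k M]
    (a : A) : M →ₗ[k] M where
  toFun m := op a • m
  map_add' _ _ := smul_add _ _ _
  map_smul' _ _ := smul_comm _ _ _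

/-- `dim_k (M e)`, the `k`-dimension of the image of right multiplication by `e` on `M`. -/
noncomputable def dimAt (k : Type) [Field k] (A : Type) [Ring A] [Algebra k A]
    (M : Type) [AddCommGroup M] [Module k M] [Module Aᵐᵒᵖ M] [SMulCommClass Aᵐᵒᵖ k M]
    (a : A) : ℕ :=
  Module.finrank k (LinearMap.range (rightMulLin k A M a))

/-- An idempotent is primitive if it is nonzero and is not the sum of two nonzero
orthogonal idempotents. -/
def IsPrimitiveIdempotent (A : Type) [Ring A] (e : A) : Prop :=
  IsIdempotentElem e ∧ e ≠ 0 ∧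
    ∀ a b : A, IsIdempotentElem a → IsIdempotentElem b → a * b = 0 → b * a = 0 →
      a + b = e → a = 0 ∨ b = 0

/-- A module is indecomposable if it is nonzero and admits no nontrivial direct sum
decomposition. -/
def IsIndecomposableModule (A : Type) [Ring A] (M : Type) [AddCommGroup M]
    [Module Aᵐᵒᵖ M] : Prop :=
  (⊤ : Submodule Aᵐᵒᵖ M) ≠ ⊥ ∧
    ∀ N N' : Submodule Aᵐᵒᵖ M, IsCompl N N' → N = ⊥ ∨ N' = ⊥

/-!
An endomorphism `f` commutes with the action of each `e v`, so it preserves `M e_v` and acts on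
this space of dimension at most one by a scalar. As `∑ v, e v = 1`, these spaces span `M`, so `f`
is diagonalizable over `k`: its kernel is the `0`-eigenspace and its image is the sum of the other
eigenspaces, whence `M` is the direct sum of the two. If `M` is indecomposable and `μ` is an
eigenvalue of `f`, then `f - μ` is not injective, so it vanishes.
-/

section SpanningRanges

variable {R M ι : Type*} [Semiring R] [AddCommMonoid M] [Module R M] [Fintype ι]

theorem iSup_range_eq_top_of_sum_eq_one {g : ι → Module.End R M} (hg : ∑ i, g i = 1) :
    ⨆ i, LinearMap.range (g i) = ⊤ := by
  refine eq_top_iff.mpr fun m _ ↦ ?_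
  have hm : ∑ i, g i m = m := by rw [← LinearMap.sum_apply, hg, Module.End.one_apply]
  rw [← hm]
  exact Submodule.sum_mem _ fun i _ ↦ Submodule.mem_iSup_of_mem i (LinearMap.mem_range_self _ m)

end SpanningRanges

section Diagonalizable

variable {k V : Type*} [Field k] [AddCommGroup V] [Module k V] {f : Module.End k V}

theorem exists_le_eigenspace_of_finrank_le_one {p : Submodule k V} [Module.Finite k p]
    (hfp : ∀ x ∈ p, f x ∈ p) (hp : Module.finrank k p ≤ 1) : ∃ μ, p ≤ f.eigenspace μ := by
  obtain ⟨v, hv⟩ := finrank_le_one_iff.mp hp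
  obtain ⟨μ, hμ⟩ := hv (f.restrict hfp v)
  have hfv : f v = μ • (v : V) := congrArg Subtype.val hμ.symm
  refine ⟨μ, fun x hx ↦ Module.End.mem_eigenspace_iff.mpr ?_⟩
  obtain ⟨c, hc⟩ := hv ⟨x, hx⟩
  obtain rfl : c • (v : V) = x := congrArg Subtype.val hc
  rw [map_smul, hfv, smul_comm]

theorem iSup_eigenspace_eq_top_of_commute_of_finrank_range_le_one {ι : Type*} [Fintype ι]
    {g : ι → Module.End k V} [∀ i, Module.Finite k (LinearMap.range (g i))] (hsum : ∑ i, g i = 1)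
    (hcomm : ∀ i, Commute f (g i)) (hrank : ∀ i, Module.finrank k (LinearMap.range (g i)) ≤ 1) :
    ⨆ μ, f.eigenspace μ = ⊤ := by
  rw [eq_top_iff, ← iSup_range_eq_top_of_sum_eq_one hsum]
  refine iSup_le fun i ↦ ?_
  have hinv : ∀ x ∈ LinearMap.range (g i), f x ∈ LinearMap.range (g i) := by
    rintro _ ⟨y, rfl⟩
    exact ⟨f y, (LinearMap.congr_fun (hcomm i).eq y).symm⟩
  obtain ⟨μ, hμ⟩ := exists_le_eigenspace_of_finrank_le_one hinv (hrank i)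
  exact hμ.trans (le_iSup f.eigenspace μ)

theorem eigenspace_le_range {μ : k} (hμ : μ ≠ 0) : f.eigenspace μ ≤ LinearMap.range f := by
  intro x hx
  refine ⟨μ⁻¹ • x, ?_⟩
  rw [map_smul, Module.End.mem_eigenspace_iff.mp hx, inv_smul_smul₀ hμ]

theorem range_le_iSup_eigenspace_ne_zero (hf : ⨆ μ, f.eigenspace μ = ⊤) :
    LinearMap.range f ≤ ⨆ (μ : k) (_ : μ ≠ 0), f.eigenspace μ := by
  rw [LinearMap.range_eq_map, ← hf, Submodule.map_iSup]
  refine iSup_le fun μ ↦ Submodule.map_le_iff_le_comap.mpr fun x hx ↦ ?_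
  rw [Submodule.mem_comap, Module.End.mem_eigenspace_iff.mp hx]
  obtain rfl | hμ := eq_or_ne μ 0
  · rw [zero_smul]
    exact zero_mem _
  · exact Submodule.smul_mem _ μ (le_biSup f.eigenspace hμ hx)

theorem isCompl_range_ker_of_iSup_eigenspace_eq_top (hf : ⨆ μ, f.eigenspace μ = ⊤) :
    IsCompl (LinearMap.range f) (LinearMap.ker f) := by
  rw [← f.eigenspace_zero]
  constructor
  · exact ((f.eigenspaces_iSupIndep 0).mono_right (range_le_iSup_eigenspace_ne_zero hf)).symm
  · rw [codisjoint_iff_le_sup, ← hf]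
    refine iSup_le fun μ ↦ ?_
    obtain rfl | hμ := eq_or_ne μ 0
    · exact le_sup_right
    · exact (eigenspace_le_range hμ).trans le_sup_left

end Diagonalizable

section Eigenvalue

variable {k R M : Type*} [CommRing k] [AddCommGroup M] [Module k M]

theorem exists_hasEigenvalue_of_iSup_eigenspace_eq_top [Nontrivial M] {f : Module.End k M}
    (hf : ⨆ μ, f.eigenspace μ = ⊤) : ∃ μ, f.HasEigenvalue μ := by
  by_contra! hnone
  have hbot (μ : k) : f.eigenspace μ = ⊥ := not_not.mp (hnone μ)
  simp only [hbot, iSup_bot, bot_ne_top] at hf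

variable [Ring R] [Algebra k R] [Module R M] [IsScalarTower k R M]

theorem algebraMap_end_surjective_of_hasEigenvalue
    (hinj : ∀ f : Module.End R M, f = 0 ∨ Function.Injective f)
    (heig : ∀ f : Module.End R M, ∃ μ : k, Module.End.HasEigenvalue (f.restrictScalars k) μ) :
    Function.Surjective (algebraMap k (Module.End R M)) := by
  intro f
  obtain ⟨μ, hμ⟩ := heig f
  obtain ⟨x, hx⟩ := hμ.exists_hasEigenvector
  have hfx : f x = μ • x := hx.apply_eq_smul
  have hkill : (f - algebraMap k (Module.End R M) μ) x = 0 := by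
    rw [LinearMap.sub_apply, Module.algebraMap_end_apply, hfx, sub_self]
  have hzero : f - algebraMap k (Module.End R M) μ = 0 :=
    (hinj _).resolve_right fun h ↦ hx.2 (h (hkill.trans (map_zero _).symm))
  exact ⟨μ, (sub_eq_zero.mp hzero).symm⟩

end Eigenvalue

theorem eq_zero_or_bijective_of_isCompl_range_ker {R M : Type*} [Ring R] [AddCommGroup M]
    [Module R M] (hM : ∀ N N' : Submodule R M, IsCompl N N' → N = ⊥ ∨ N' = ⊥)
    {f : Module.End R M} (hf : IsCompl (LinearMap.range f) (LinearMap.ker f)) :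
    f = 0 ∨ Function.Bijective f := by
  refine (hM _ _ hf).imp LinearMap.range_eq_bot.mp fun hker ↦ ?_
  have hrange : LinearMap.range f = ⊤ := eq_top_of_isCompl_bot (hker ▸ hf)
  exact ⟨LinearMap.ker_eq_bot.mp hker, LinearMap.range_eq_top.mp hrange⟩

section ThinModule

variable {k R M ι : Type*} [Field k] [Ring R] [Algebra k R] [AddCommGroup M] [Module k M]
  [Module R M] [IsScalarTower k R M] [FiniteDimensional k M] [Fintype ι] {e : ι → R}

theorem iSup_eigenspace_restrictScalars_eq_top_of_thin (hsum : ∑ i, e i = 1)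
    (hthin : ∀ i, Module.finrank k (LinearMap.range (Algebra.lsmul k k M (e i))) ≤ 1)
    (f : Module.End R M) : ⨆ μ, Module.End.eigenspace (f.restrictScalars k) μ = ⊤ := by
  refine iSup_eigenspace_eq_top_of_commute_of_finrank_range_le_one
    (g := fun i ↦ Algebra.lsmul k k M (e i)) ?_ ?_ hthin
  · rw [← map_sum, hsum, map_one]
  · exact fun i ↦ LinearMap.ext fun m ↦ f.map_smul (e i) m

theorem isCompl_range_ker_of_thin (hsum : ∑ i, e i = 1)
    (hthin : ∀ i, Module.finrank k (LinearMap.range (Algebra.lsmul k k M (e i))) ≤ 1)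
    (f : Module.End R M) : IsCompl (LinearMap.range f) (LinearMap.ker f) :=
  (Submodule.isCompl_restrictScalars_iff k).mp <| isCompl_range_ker_of_iSup_eigenspace_eq_top <|
    iSup_eigenspace_restrictScalars_eq_top_of_thin hsum hthin f

theorem image_of_endomorphism_is_summand_of_thin_dimension_vector_general (hsum : ∑ i, e i = 1)
    (hthin : ∀ i, Module.finrank k (LinearMap.range (Algebra.lsmul k k M (e i))) ≤ 1) :
    (∀ f : M →ₗ[R] M, ∃ N : Submodule R M, IsCompl (LinearMap.range f) N) ∧
    ((⊤ : Submodule R M) ≠ ⊥ ∧ (∀ N N' : Submodule R M, IsCompl N N' → N = ⊥ ∨ N' = ⊥) →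
      (∀ f : M →ₗ[R] M, f = 0 ∨ Function.Bijective f) ∧
      Nonempty ((M →ₗ[R] M) ≃ₐ[k] k)) := by
  have hcompl := isCompl_range_ker_of_thin hsum hthin
  refine ⟨fun f ↦ ⟨_, hcompl f⟩, fun ⟨hM, hindec⟩ ↦ ?_⟩
  have : Nontrivial M := (Submodule.nontrivial_iff R).mp ⟨_, _, hM⟩
  have hbij (f : Module.End R M) : f = 0 ∨ Function.Bijective f :=
    eq_zero_or_bijective_of_isCompl_range_ker hindec (hcompl f)
  have hsurj : Function.Surjective (algebraMap k (Module.End R M)) :=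
    algebraMap_end_surjective_of_hasEigenvalue
      (fun f ↦ (hbij f).imp_right Function.Bijective.injective)
      fun f ↦ exists_hasEigenvalue_of_iSup_eigenspace_eq_top
        (iSup_eigenspace_restrictScalars_eq_top_of_thin hsum hthin f)
  exact ⟨hbij, ⟨(AlgEquiv.ofBijective (Algebra.ofId k (Module.End R M))
    ⟨(algebraMap k (Module.End R M)).injective, hsurj⟩).symm⟩⟩

end ThinModule

theorem image_of_endomorphism_is_summand_of_thin_dimension_vector
    (k : Type) [Field k] [IsAlgClosed k] [CharZero k]
    (A : Type) [Ring A] [Algebra k A] [FiniteDimensional k A]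
    (Q₀ : Type) [Fintype Q₀] (e : Q₀ → A)
    (he : CompleteOrthogonalIdempotents e)
    (hprim : ∀ v, IsPrimitiveIdempotent A (e v))
    -- `A` is basic: the indecomposable projectives `e v • A` are pairwise non-isomorphic
    (hbasic : ∀ v w : Q₀, v ≠ w →
      IsEmpty (↥(Submodule.span Aᵐᵒᵖ {e v}) ≃ₗ[Aᵐᵒᵖ] ↥(Submodule.span Aᵐᵒᵖ {e w})))
    (M : Type) [AddCommGroup M] [Module k M] [Module Aᵐᵒᵖ M]
    [SMulCommClass Aᵐᵒᵖ k M] [IsScalarTower k Aᵐᵒᵖ M]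
    [FiniteDimensional k M]
    (hthin : ∀ v, dimAt k A M (e v) ≤ 1) :
    (∀ f : M →ₗ[Aᵐᵒᵖ] M, ∃ N : Submodule Aᵐᵒᵖ M, IsCompl (LinearMap.range f) N) ∧
    (IsIndecomposableModule A M →
      (∀ f : M →ₗ[Aᵐᵒᵖ] M, f = 0 ∨ Function.Bijective f) ∧
      Nonempty ((M →ₗ[Aᵐᵒᵖ] M) ≃ₐ[k] k)) :=
  image_of_endomorphism_is_summand_of_thin_dimension_vector_general (e := fun v ↦ op (e v))
    (by rw [← Finset.op_sum, he.complete, op_one]) hthin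
end

section
/- Any finite-dimensional right A-module M with dimension vector 𝟏 (that is, dim_k M e_v = 1 for every vertex v) has endomorphism algebra End_A M ≅ k^n as k-algebras, where n is the number of indecomposable direct summands in a decomposition of M into indecomposables; in particular, the indecomposable summands are pairwise non-isomorphic and each has endomorphism ring k. -/
/-!
STATEMENT 1 (Proposition 4.2 of the paper).
Any finite-dimensional right `A`-module `M` with dimension vector `𝟏` (i.e.
`dim_k (M • e v) = 1` for every vertex `v`) has endomorphism algebra `End_A M ≅ kⁿ`,
where `n` is the number of indecomposable summands in a decomposition of `M` into
indecomposables; the summands are pairwise non-isomorphic and each has endomorphism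
ring `k`.
-/

open MulOpposite

/-!
An endomorphism `f` of `M` preserves each `M e_v`, which has dimension at most one, hence acts on it
by a scalar. As `M` is the sum of these subspaces, `End M` is commutative and `f` is killed by a
product of distinct factors `X - c` with `c` in `k`. Commuting with projections, all endomorphisms
preserve every direct summand, so `End M` is the product of the `End (N i)` and there are no nonzero
maps between distinct summands. An indecomposable summand has only trivial idempotent endomorphisms,
while coprime factors of an annihilating polynomial produce idempotents by Bézout; so each of its
endomorphisms is killed by a single `X - c`, that is, it is a scalar.
-/

section TrivialIdempotents

open Polynomial

variable {K E : Type*} [Ring E]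

theorem aeval_eq_zero_or_of_isCoprime [CommRing K] [Algebra K E]
    (hE : ∀ u : E, IsIdempotentElem u → u = 0 ∨ u = 1) {p q : K[X]} (hpq : IsCoprime p q) {f : E}
    (hf : aeval f (p * q) = 0) : aeval f p = 0 ∨ aeval f q = 0 := by
  obtain ⟨a, b, hab⟩ := hpq
  have hadd : aeval f (a * p) + aeval f (b * q) = 1 := by rw [← map_add, hab, map_one]
  have hmul : aeval f (a * p) * aeval f (b * q) = 0 := by
    rw [← map_mul, mul_mul_mul_comm, map_mul, hf, mul_zero]
  rcases hE _ (IsIdempotentElem.of_mul_add hmul hadd).1 with h | h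
  · left
    rw [h, zero_add] at hadd
    calc aeval f p = aeval f p * aeval f (b * q) := by rw [hadd, mul_one]
      _ = aeval f b * aeval f (p * q) := by rw [← map_mul, ← map_mul, mul_left_comm]
      _ = 0 := by rw [hf, mul_zero]
  · right
    calc aeval f q = aeval f q * aeval f (a * p) := by rw [h, mul_one]
      _ = aeval f a * aeval f (p * q) := by rw [← map_mul, ← map_mul, mul_left_comm, mul_comm q]
      _ = 0 := by rw [hf, mul_zero]

theorem exists_algebraMap_eq_of_aeval_prod_X_sub_C_eq_zero [Field K] [Algebra K E] [Nontrivial E]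
    (hE : ∀ u : E, IsIdempotentElem u → u = 0 ∨ u = 1) {f : E} (s : Finset K)
    (hf : aeval f (∏ c ∈ s, (X - C c)) = 0) : ∃ c ∈ s, algebraMap K E c = f := by
  classical
  induction s using Finset.induction_on with
  | empty => simp at hf
  | insert c s hc ih =>
    rw [Finset.prod_insert hc] at hf
    have hcop : IsCoprime (X - C c) (∏ d ∈ s, (X - C d)) := IsCoprime.prod_right fun d hd =>
      pairwise_coprime_X_sub_C Function.injective_id fun hcd : c = d => hc (hcd ▸ hd)
    rcases aeval_eq_zero_or_of_isCoprime hE hcop hf with h | h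
    · refine ⟨c, Finset.mem_insert_self c s, ?_⟩
      rw [map_sub, aeval_X, aeval_C, sub_eq_zero] at h
      exact h.symm
    · obtain ⟨d, hd, rfl⟩ := ih h
      exact ⟨d, Finset.mem_insert_of_mem hd, rfl⟩

end TrivialIdempotents

theorem isCompl_iSup_ne {J L : Type*} [CompleteLattice L] {N : J → L} (hind : iSupIndep N)
    (htop : ⨆ i, N i = ⊤) (i : J) : IsCompl (N i) (⨆ (j) (_ : j ≠ i), N j) :=
  ⟨hind i, codisjoint_iff.mpr ((iSup_split_single N i).symm.trans htop)⟩

theorem linearMap_ext_of_sum_eq_one {R M M' Q : Type*} [Semiring R] [AddCommMonoid M]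
    [AddCommMonoid M'] [Module R M] [Module R M'] [Fintype Q] {e : Q → R} (he : ∑ v, e v = 1)
    {f g : M →ₗ[R] M'} (h : ∀ v x, f (e v • x) = g (e v • x)) : f = g := by
  ext x
  rw [← one_smul R x, ← he, Finset.sum_smul, map_sum, map_sum]
  exact Finset.sum_congr rfl fun v _ => h v x

section Summands

variable {R M : Type*} [Ring R] [AddCommGroup M] [Module R M]

variable (R M) in
/-- A nonzero module without nontrivial direct sum decompositions; this is
`IsIndecomposableModule` for left modules over any ring. -/
def IsIndecomposable : Prop :=
  (⊤ : Submodule R M) ≠ ⊥ ∧ ∀ N N' : Submodule R M, IsCompl N N' → N = ⊥ ∨ N' = ⊥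

theorem IsIndecomposable.nontrivial (h : IsIndecomposable R M) : Nontrivial M :=
  (Submodule.nontrivial_iff R).mp ⟨⊤, ⊥, h.1⟩

theorem IsIndecomposable.eq_zero_or_one_of_isIdempotentElem (h : IsIndecomposable R M)
    {u : Module.End R M} (hu : IsIdempotentElem u) : u = 0 ∨ u = 1 := by
  rcases h.2 _ _ (LinearMap.IsIdempotentElem.isCompl hu) with hrange | hker
  · exact Or.inl (LinearMap.range_eq_bot.mp hrange)
  · right
    ext x
    exact LinearMap.ker_eq_bot.mp hker (LinearMap.congr_fun hu x)

theorem isFullyInvariant_of_isCompl_of_commute {P Q : Submodule R M} (hPQ : IsCompl P Q)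
    (hcomm : ∀ f g : Module.End R M, Commute f g) : P.IsFullyInvariant := fun f => by
  have h := ((LinearMap.IsIdempotentElem.commute_iff
    (Submodule.isIdempotentElem_projection hPQ)).mp (hcomm _ f)).1
  rwa [Submodule.range_projection] at h

theorem linearMap_eq_zero_of_isFullyInvariant {P P' Q : Submodule R M} (hP : P.IsFullyInvariant)
    (hPP' : IsCompl P P') (hPQ : Disjoint P Q) (s : P →ₗ[R] Q) : s = 0 := by
  ext x
  have hmem := hP (Q.subtype ∘ₗ s ∘ₗ P.projectionOnto P' hPP') x.2
  simp only [Submodule.mem_comap, LinearMap.comp_apply, Submodule.projectionOnto_apply_left,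
    Submodule.subtype_apply] at hmem
  exact Submodule.disjoint_def.mp hPQ _ hmem (s x).2

end Summands

section Thin

open Polynomial

variable {k R M Q : Type*} [Field k] [Ring R] [Algebra k R]
  [AddCommGroup M] [Module k M] [Module R M] [IsScalarTower k R M] {e : Q → R}

variable (k M e) in
/-- A thin module: multiplication by each `e v` has image of dimension at most one. Cardinal rank
is used so that infinite-dimensional images are excluded. For right modules take `R = Aᵐᵒᵖ`. -/
def IsThin : Prop :=
  ∀ v, Module.rank k (LinearMap.range (Algebra.lsmul k k M (e v))) ≤ 1

namespace IsThin

theorem submodule (h : IsThin k M e) (N : Submodule R M) : IsThin k N e := fun v => by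
  let i : N →ₗ[k] M := N.subtype.restrictScalars k
  have hle : (LinearMap.range (Algebra.lsmul k k N (e v))).map i ≤
      LinearMap.range (Algebra.lsmul k k M (e v)) := by
    rintro _ ⟨_, ⟨x, rfl⟩, rfl⟩
    exact ⟨x, rfl⟩
  calc _ = Module.rank k ((LinearMap.range (Algebra.lsmul k k N (e v))).map i) :=
        (Submodule.equivMapOfInjective i N.injective_subtype _).rank_eq
    _ ≤ _ := Submodule.rank_mono hle
    _ ≤ 1 := h v

theorem exists_apply_eq_smul (h : IsThin k M e) (f : Module.End R M) (v : Q) :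
    ∃ c : k, ∀ x, f (e v • x) = c • e v • x := by
  obtain ⟨_, ⟨y, rfl⟩, hspan⟩ := (rank_submodule_le_one_iff _).mp (h v)
  have hmul (x : M) : ∃ d : k, d • e v • y = e v • x :=
    Submodule.mem_span_singleton.mp (hspan ⟨x, rfl⟩)
  obtain ⟨c, hc⟩ := hmul (f y)
  refine ⟨c, fun x => ?_⟩
  obtain ⟨d, hd⟩ := hmul x
  rw [← hd, f.map_smul_of_tower, map_smul, ← hc, smul_comm]

variable [Fintype Q]

theorem commute (h : IsThin k M e) (he : ∑ v, e v = 1) (f g : Module.End R M) : Commute f g :=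
  linearMap_ext_of_sum_eq_one he fun v x => by
    obtain ⟨c, hc⟩ := h.exists_apply_eq_smul f v
    obtain ⟨d, hd⟩ := h.exists_apply_eq_smul g v
    calc f (g (e v • x)) = d • c • e v • x := by rw [hd, f.map_smul_of_tower, hc]
      _ = c • d • e v • x := smul_comm d c _
      _ = g (f (e v • x)) := by rw [hc, g.map_smul_of_tower, hd]

theorem exists_aeval_prod_X_sub_C_eq_zero (h : IsThin k M e) (he : ∑ v, e v = 1)
    (f : Module.End R M) : ∃ s : Finset k, aeval f (∏ c ∈ s, (X - C c)) = 0 := by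
  classical
  choose c hc using h.exists_apply_eq_smul f
  refine ⟨Finset.univ.image c, linearMap_ext_of_sum_eq_one he fun v x => ?_⟩
  obtain ⟨q, hq⟩ : X - C (c v) ∣ ∏ d ∈ Finset.univ.image c, (X - C d) :=
    Finset.dvd_prod_of_mem _ (Finset.mem_image_of_mem c (Finset.mem_univ v))
  have hroot : aeval f (X - C (c v)) (e v • x) = 0 := by
    rw [map_sub, aeval_X, aeval_C, LinearMap.sub_apply, hc, Module.algebraMap_end_apply, sub_self]
  rw [hq, mul_comm, map_mul, Module.End.mul_apply, hroot, map_zero, LinearMap.zero_apply]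

theorem bijective_algebraMap_end (h : IsThin k M e) (he : ∑ v, e v = 1)
    (hM : IsIndecomposable R M) : Function.Bijective (algebraMap k (Module.End R M)) := by
  have := hM.nontrivial
  refine ⟨FaithfulSMul.algebraMap_injective k _, fun f => ?_⟩
  obtain ⟨s, hs⟩ := h.exists_aeval_prod_X_sub_C_eq_zero he f
  obtain ⟨c, -, hc⟩ := exists_algebraMap_eq_of_aeval_prod_X_sub_C_eq_zero
    (fun _ => hM.eq_zero_or_one_of_isIdempotentElem) s hs
  exact ⟨c, hc⟩

end IsThin

theorem endomorphism_algebra_of_dimension_vector_one_general [Fintype Q] (he : ∑ v, e v = 1)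
    (hM : IsThin k M e) {J : Type*} [DecidableEq J] {N : J → Submodule R M}
    (hN : DirectSum.IsInternal N) (hindec : ∀ i, IsIndecomposable R (N i)) :
    Nonempty (Module.End R M ≃ₐ[k] (J → k)) ∧
    (∀ i j, i ≠ j → IsEmpty (N i ≃ₗ[R] N j)) ∧
    (∀ i, Nonempty (Module.End R (N i) ≃ₐ[k] k)) := by
  have hind := hN.submodule_iSupIndep
  have htop := hN.submodule_iSup_eq_top
  have hinv (i : J) : (N i).IsFullyInvariant :=
    isFullyInvariant_of_isCompl_of_commute (isCompl_iSup_ne hind htop i) (hM.commute he)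
  let scalars (i : J) : Module.End R (N i) ≃ₐ[k] k :=
    (AlgEquiv.ofBijective (Algebra.ofId k _)
      ((hM.submodule (N i)).bijective_algebraMap_end he (hindec i))).symm
  refine ⟨⟨(hind.algEquiv k htop hinv).trans (AlgEquiv.piCongrRight scalars)⟩, fun i j hij => ⟨?_⟩,
    fun i => ⟨scalars i⟩⟩
  intro s
  have := (hindec i).nontrivial
  obtain ⟨x, hx⟩ := exists_ne (0 : N i)
  have hs : s.toLinearMap = 0 := linearMap_eq_zero_of_isFullyInvariant (hinv i)
    (isCompl_iSup_ne hind htop i) (hind.pairwiseDisjoint hij) _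
  exact hx (s.map_eq_zero_iff.mp (LinearMap.congr_fun hs x))

end Thin

theorem isThin_op_of_dimAt_eq_one {k A M Q : Type} [Field k] [Ring A] [Algebra k A]
    [AddCommGroup M] [Module k M] [Module Aᵐᵒᵖ M] [SMulCommClass Aᵐᵒᵖ k M] [IsScalarTower k Aᵐᵒᵖ M]
    {e : Q → A} (h : ∀ v, dimAt k A M (e v) = 1) : IsThin k M fun v => op (e v) :=
  fun v => (Module.rank_eq_one_iff_finrank_eq_one.mpr (h v)).le

theorem endomorphism_algebra_of_dimension_vector_one
    (k : Type) [Field k] [IsAlgClosed k] [CharZero k]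
    (A : Type) [Ring A] [Algebra k A] [FiniteDimensional k A]
    (Q₀ : Type) [Fintype Q₀] (e : Q₀ → A)
    (he : CompleteOrthogonalIdempotents e)
    (hprim : ∀ v, IsPrimitiveIdempotent A (e v))
    (hbasic : ∀ v w : Q₀, v ≠ w →
      IsEmpty (↥(Submodule.span Aᵐᵒᵖ {e v}) ≃ₗ[Aᵐᵒᵖ] ↥(Submodule.span Aᵐᵒᵖ {e w})))
    (M : Type) [AddCommGroup M] [Module k M] [Module Aᵐᵒᵖ M]
    [SMulCommClass Aᵐᵒᵖ k M] [IsScalarTower k Aᵐᵒᵖ M]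
    [FiniteDimensional k M]
    (hone : ∀ v, dimAt k A M (e v) = 1)
    -- a decomposition of `M` into indecomposable submodules
    (n : ℕ) (N : Fin n → Submodule Aᵐᵒᵖ M)
    (hinternal : DirectSum.IsInternal N)
    (hindec : ∀ i, IsIndecomposableModule A ↥(N i)) :
    Nonempty ((M →ₗ[Aᵐᵒᵖ] M) ≃ₐ[k] (Fin n → k)) ∧
    (∀ i j : Fin n, i ≠ j → IsEmpty (↥(N i) ≃ₗ[Aᵐᵒᵖ] ↥(N j))) ∧
    (∀ i, Nonempty ((↥(N i) →ₗ[Aᵐᵒᵖ] ↥(N i)) ≃ₐ[k] k)) := by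
  exact endomorphism_algebra_of_dimension_vector_one_general
    (by rw [← Finset.op_sum, he.complete, op_one]) (isThin_op_of_dimAt_eq_one hone) hinternal hindec
end

section
/- Let R be a regular local ring of Krull dimension d ≥ 1, and let 0 → F_d → F_{d−1} → ⋯ → F_1 → F_0 → 0 be a complex of finitely generated free R-modules (concentrated in homological degrees 0 through d) such that every homology module H_j of the complex has finite length over R. Then H_j = 0 for all j ≥ 1, i.e. the complex is exact except possibly at the degree-0 spot. -/
/-!
STATEMENT 15 (the commutative-algebra core of Lemma 10.3 of the paper).
Let `R` be a regular local ring of Krull dimension `d ≥ 1` (regularity is expressed by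
the maximal ideal being generated by `d` elements), and let
`0 → F_d → ⋯ → F_1 → F_0 → 0` be a complex of finitely generated free `R`-modules whose
homology modules all have finite length.  Then the homology vanishes in all degrees
`j ≥ 1`.
-/

open CategoryTheory

/-!
The argument is the acyclicity lemma of Peskine and Szpiro. Let `k` be the residue field and
measure depth by the vanishing of `Ext^i(k, -)`. A regular local ring is a domain and its maximal
ideal is generated by a regular sequence, so every `F_j` has depth at least `d ≥ j`. Write `Z_j`
and `B_j` for cycles and boundaries and go down from the top degree, with the induction hypothesis
`depth Z_{j+1} ≥ j + 2`. The sequence `0 → Z_{j+1} → F_{j+1} → B_j → 0` gives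
`depth B_j ≥ j + 1 ≥ 2`, and `Hom(k, Z_j) ⊆ Hom(k, F_j) = 0`, so `0 → B_j → Z_j → H_j → 0` gives
`Hom(k, H_j) = 0`. A nonzero module of finite length has a simple submodule, hence `H_j = 0`,
and `Z_j = B_j` has depth at least `j + 1`.
-/

universe w v u

section RegularLocalRings

open IsLocalRing RingTheory.Sequence

lemma exists_span_insert_sdiff_singleton_eq {R M : Type*} [CommRing R] [IsLocalRing R]
    [AddCommGroup M] [Module R M] {G : Set M} {x : M} (hx : x ∈ Submodule.span R G)
    (hxm : x ∉ maximalIdeal R • Submodule.span R G) :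
    ∃ g ∈ G, Submodule.span R (insert x (G \ {g})) = Submodule.span R G := by
  classical
  obtain ⟨c, hcG, rfl⟩ := Submodule.mem_span_set.mp hx
  obtain ⟨g, hg, hunit⟩ : ∃ g ∈ c.support, IsUnit (c g) := by
    by_contra! hcon
    exact hxm <| Submodule.sum_mem _ fun g hg =>
      Submodule.smul_mem_smul (hcon g hg) (Submodule.subset_span (hcG hg))
  have hrest : ∑ h ∈ c.support.erase g, c h • h ∈ Submodule.span R (G \ {g}) :=
    Submodule.sum_mem _ fun h hh => Submodule.smul_mem _ _ <| Submodule.subset_span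
      ⟨hcG (Finset.mem_of_mem_erase hh), Finset.ne_of_mem_erase hh⟩
  have hsum : c g • g + ∑ h ∈ c.support.erase g, c h • h = c.sum fun h r => r • h :=
    Finset.add_sum_erase _ (fun h => c h • h) hg
  have hgmem : g ∈ Submodule.span R (insert (c.sum fun h r => r • h) (G \ {g})) := by
    rw [← Submodule.smul_mem_iff_of_isUnit _ hunit, eq_sub_of_add_eq hsum]
    exact sub_mem (Submodule.subset_span (Set.mem_insert _ _))
      (Submodule.span_mono (Set.subset_insert _ _) hrest)
  refine ⟨g, hcG hg, le_antisymm (Submodule.span_le.mpr ?_) (Submodule.span_le.mpr ?_)⟩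
  · exact Set.insert_subset hx (Set.sdiff_subset.trans Submodule.subset_span)
  · intro h hh
    by_cases hhg : h = g
    · exact hhg ▸ hgmem
    · exact Submodule.subset_span (.inr ⟨hh, hhg⟩)

variable {R : Type*} [CommRing R]

lemma spanFinrank_maximalIdeal_quotient_span_singleton_lt [IsLocalRing R]
    (hfg : Submodule.FG (maximalIdeal R)) {x : R} [IsLocalRing (R ⧸ Ideal.span {x})]
    (hx : x ∈ maximalIdeal R) (hx2 : x ∉ maximalIdeal R ^ 2) :
    (maximalIdeal (R ⧸ Ideal.span {x})).spanFinrank < (maximalIdeal R).spanFinrank := by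
  let π := Ideal.Quotient.mk (Ideal.span {x})
  let G := (maximalIdeal R).generators
  have hG : Submodule.span R G = maximalIdeal R := (maximalIdeal R).span_generators
  have hGfin : G.Finite := hfg.finite_generators
  obtain ⟨g, hg, hspan⟩ : ∃ g ∈ G, Submodule.span R (insert x (G \ {g})) = _ :=
    exists_span_insert_sdiff_singleton_eq (hG.symm ▸ hx) (by rwa [hG, smul_eq_mul, ← pow_two])
  have hmax : maximalIdeal (R ⧸ Ideal.span {x}) = Ideal.span (π '' (G \ {g})) := by
    have hπx : π x = 0 := Ideal.Quotient.eq_zero_iff_mem.mpr (Ideal.mem_span_singleton_self x)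
    rw [← map_maximalIdeal_of_surjective π Ideal.Quotient.mk_surjective, ← hG, ← hspan,
      ← Ideal.span, Ideal.map_span, Set.image_insert_eq, hπx, Ideal.span_insert_zero]
  calc (maximalIdeal (R ⧸ Ideal.span {x})).spanFinrank
      ≤ (π '' (G \ {g})).ncard :=
        hmax ▸ Submodule.spanFinrank_span_le_ncard_of_finite (hGfin.sdiff.image π)
    _ ≤ (G \ {g}).ncard := Set.ncard_image_le hGfin.sdiff
    _ < G.ncard := Set.ncard_sdiff_singleton_lt_of_mem hg hGfin
    _ = (maximalIdeal R).spanFinrank := hfg.generators_ncard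

lemma isLocalRing_quotient_span_singleton [IsLocalRing R] {x : R} (hx : x ∈ maximalIdeal R) :
    IsLocalRing (R ⧸ Ideal.span {x}) :=
  have : Nontrivial (R ⧸ Ideal.span {x}) := Ideal.Quotient.nontrivial_iff.mpr
    (Ideal.span_singleton_ne_top hx)
  .of_surjective' _ Ideal.Quotient.mk_surjective

lemma ringKrullDim_le_ringKrullDim_quotient_span_singleton_add_one [IsNoetherianRing R]
    [IsLocalRing R] {x : R} (hx : x ∈ maximalIdeal R) :
    ringKrullDim R ≤ ringKrullDim (R ⧸ Ideal.span {x}) + 1 :=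
  maximalIdeal_height_eq_ringKrullDim (R := R) ▸ Ideal.height_le_ringKrullDim_quotient_add_one hx

lemma spanFinrank_maximalIdeal_quotient_add_one_le_ringKrullDim [IsRegularLocalRing R] {x : R}
    [IsLocalRing (R ⧸ Ideal.span {x})] (hx : x ∈ maximalIdeal R) (hx2 : x ∉ maximalIdeal R ^ 2) :
    ((maximalIdeal (R ⧸ Ideal.span {x})).spanFinrank + 1 : WithBot ℕ∞) ≤ ringKrullDim R := by
  rw [← IsRegularLocalRing.spanFinrank_maximalIdeal (R := R)]
  exact_mod_cast spanFinrank_maximalIdeal_quotient_span_singleton_lt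
    (IsNoetherian.noetherian _) hx hx2

lemma isRegularLocalRing_quotient_span_singleton [IsRegularLocalRing R] {x : R}
    (hx : x ∈ maximalIdeal R) (hx2 : x ∉ maximalIdeal R ^ 2) :
    IsRegularLocalRing (R ⧸ Ideal.span {x}) :=
  have := isLocalRing_quotient_span_singleton hx
  .of_spanFinrank_maximalIdeal_le _ <| ENat.WithBot.add_le_add_one_right_iff.mp <|
    (spanFinrank_maximalIdeal_quotient_add_one_le_ringKrullDim hx hx2).trans
      (ringKrullDim_le_ringKrullDim_quotient_span_singleton_add_one hx)

lemma ringKrullDim_quotient_span_singleton_add_one [IsRegularLocalRing R] {x : R}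
    (hx : x ∈ maximalIdeal R) (hx2 : x ∉ maximalIdeal R ^ 2) :
    ringKrullDim (R ⧸ Ideal.span {x}) + 1 = ringKrullDim R :=
  have := isRegularLocalRing_quotient_span_singleton hx hx2
  le_antisymm
    (IsRegularLocalRing.spanFinrank_maximalIdeal (R := R ⧸ Ideal.span {x}) ▸
      spanFinrank_maximalIdeal_quotient_add_one_le_ringKrullDim hx hx2)
    (ringKrullDim_le_ringKrullDim_quotient_span_singleton_add_one hx)

lemma exists_mem_maximalIdeal_notMem_sq_notMem_minimalPrimes [IsNoetherianRing R] [IsLocalRing R]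
    (h : maximalIdeal R ∉ minimalPrimes R) :
    ∃ x ∈ maximalIdeal R, x ∉ maximalIdeal R ^ 2 ∧ ∀ p ∈ minimalPrimes R, x ∉ p := by
  have hne : maximalIdeal R ≠ ⊥ := fun h0 => h <| by
    have : (⊥ : Ideal R).IsPrime := h0 ▸ inferInstance
    exact ⟨⟨inferInstance, bot_le⟩, fun p _ _ => h0 ▸ bot_le⟩
  have hsq : ¬ maximalIdeal R ≤ maximalIdeal R ^ 2 := fun hle => hne <|
    Submodule.eq_bot_of_le_smul_of_le_jacobson_bot (maximalIdeal R) _ (IsNoetherian.noetherian _)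
      (by rwa [smul_eq_mul, ← pow_two]) (maximalIdeal_le_jacobson _)
  by_contra! hcon
  have hcover : (maximalIdeal R : Set R) ⊆
      ⋃ p ∈ insert (maximalIdeal R ^ 2) (minimalPrimes R), (p : Set R) := fun x hx => by
    simpa only [Set.biUnion_insert, Set.mem_union, Set.mem_iUnion, SetLike.mem_coe, exists_prop]
      using or_iff_not_imp_left.mpr (hcon x hx)
  obtain ⟨p, rfl | hp, hle⟩ := (Ideal.subset_union_prime_finite
    ((minimalPrimes.finite_of_isNoetherianRing R).insert (maximalIdeal R ^ 2)) (f := id)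
    (maximalIdeal R ^ 2) (maximalIdeal R ^ 2)
    (fun p hp hne _ => (hp.resolve_left hne).1.1)).mp hcover
  · exact hsq hle
  · exact h ((maximalIdeal.isMaximal R).eq_of_le hp.1.1.ne_top hle ▸ hp)

lemma isDomain_of_isPrime_span_singleton [IsNoetherianRing R] {x : R}
    (hx : x ∈ Ideal.jacobson (⊥ : Ideal R)) (hprime : (Ideal.span {x}).IsPrime)
    (hmin : ∀ p ∈ minimalPrimes R, x ∉ p) : IsDomain R := by
  obtain ⟨p, hp, hpx⟩ := Ideal.exists_minimalPrimes_le (J := Ideal.span {x}) bot_le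
  have : p.IsPrime := hp.1.1
  have hbot : p = ⊥ := by
    refine Submodule.eq_bot_of_le_smul_of_le_jacobson_bot (Ideal.span {x}) p
      (IsNoetherian.noetherian _) (fun y hy => ?_) ((Ideal.span_singleton_le_iff_mem _).mpr hx)
    obtain ⟨a, rfl⟩ := Ideal.mem_span_singleton.mp (hpx hy)
    exact Ideal.mul_mem_mul (Ideal.mem_span_singleton_self x)
      ((this.mem_or_mem hy).resolve_left (hmin p hp))
  subst hbot
  exact .of_bot_isPrime R

lemma exists_isRegularLocalRing_quotient_span_singleton [IsRegularLocalRing R] {d : ℕ}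
    (hdim : ringKrullDim R = (d + 1 : ℕ)) :
    ∃ x ∈ maximalIdeal R, (∀ p ∈ minimalPrimes R, x ∉ p) ∧
      IsRegularLocalRing (R ⧸ Ideal.span {x}) ∧ ringKrullDim (R ⧸ Ideal.span {x}) = d := by
  have hmin : maximalIdeal R ∉ minimalPrimes R := fun h => by
    rw [← maximalIdeal_height_eq_ringKrullDim, Ideal.height_eq_zero_iff.mpr h] at hdim
    exact absurd hdim.symm (by exact_mod_cast d.succ_ne_zero)
  obtain ⟨x, hx, hx2, hxmin⟩ := exists_mem_maximalIdeal_notMem_sq_notMem_minimalPrimes hmin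
  refine ⟨x, hx, hxmin, isRegularLocalRing_quotient_span_singleton hx hx2, ?_⟩
  rw [← ENat.WithBot.add_one_cancel, ringKrullDim_quotient_span_singleton_add_one hx hx2, hdim]
  rfl

theorem isDomain_of_isRegularLocalRing [IsRegularLocalRing R] : IsDomain R := by
  obtain ⟨d, hdim⟩ : ∃ d : ℕ, ringKrullDim R = d :=
    ⟨_, IsRegularLocalRing.spanFinrank_maximalIdeal.symm⟩
  induction d generalizing R with
  | zero =>
    have hrank : (maximalIdeal R).spanFinrank = 0 := by
      exact_mod_cast IsRegularLocalRing.spanFinrank_maximalIdeal.trans hdim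
    rw [Submodule.spanFinrank_eq_zero_iff_eq_bot (IsNoetherian.noetherian _)] at hrank
    exact (isField_iff_maximalIdeal_eq.mpr hrank).isDomain
  | succ d ih =>
    obtain ⟨x, hx, hxmin, hreg, hdim'⟩ := exists_isRegularLocalRing_quotient_span_singleton hdim
    have hprime : (Ideal.span {x}).IsPrime :=
      (Ideal.Quotient.isDomain_iff_prime _).mp (ih hdim')
    exact isDomain_of_isPrime_span_singleton (maximalIdeal_le_jacobson _ hx) hprime hxmin

lemma isWeaklyRegular_cons_of_isWeaklyRegular_quotient {x : R} {rs : List R}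
    (hx : IsSMulRegular R x)
    (hrs : IsWeaklyRegular (R ⧸ Ideal.span {x}) (rs.map (Ideal.Quotient.mk (Ideal.span {x})))) :
    IsWeaklyRegular R (x :: rs) := by
  have e : (R ⧸ Ideal.span {x}) ≃ₗ[R] QuotSMulTop x R :=
    Submodule.quotEquivOfEq _ _ (by simp [← Submodule.ideal_span_singleton_smul])
  exact .cons hx <| (e.isWeaklyRegular_congr rs).mp <|
    (isWeaklyRegular_map_algebraMap_iff (R ⧸ Ideal.span {x}) (R ⧸ Ideal.span {x}) rs).mp hrs

theorem exists_isWeaklyRegular_of_isRegularLocalRing [IsRegularLocalRing R] {d : ℕ}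
    (hdim : ringKrullDim R = d) :
    ∃ rs : List R, rs.length = d ∧ (∀ r ∈ rs, r ∈ maximalIdeal R) ∧ IsWeaklyRegular R rs := by
  induction d generalizing R with
  | zero => exact ⟨[], rfl, by simp, .nil R R⟩
  | succ d ih =>
    obtain ⟨x, hx, hxmin, hreg, hdim'⟩ := exists_isRegularLocalRing_quotient_span_singleton hdim
    obtain ⟨rs, hlen, hrs, hrsreg⟩ := ih hdim'
    obtain ⟨rs, rfl⟩ := List.map_surjective_iff.mpr Ideal.Quotient.mk_surjective rs
    have := isDomain_of_isRegularLocalRing (R := R)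
    have hx0 : x ≠ 0 := by
      simpa [IsDomain.minimalPrimes_eq_singleton_bot] using hxmin
    refine ⟨x :: rs, by simpa using hlen, List.forall_mem_cons.mpr ⟨hx, fun r hr => ?_⟩,
      isWeaklyRegular_cons_of_isWeaklyRegular_quotient (.of_ne_zero hx0) hrsreg⟩
    exact fun hunit => hrs _ (List.mem_map_of_mem hr) (hunit.map _)

lemma isWeaklyRegular_of_flat {M : Type*} [AddCommGroup M] [Module R M] [Module.Flat R M]
    {rs : List R} (h : IsWeaklyRegular R rs) : IsWeaklyRegular M rs :=
  ((TensorProduct.rid R M).isWeaklyRegular_congr rs).mp h.isWeaklyRegular_lTensor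

lemma isRegularLocalRing_of_span_range_eq_maximalIdeal [IsNoetherianRing R] [IsLocalRing R]
    {ι : Type*} [Finite ι] {s : ι → R} (hs : Ideal.span (Set.range s) = maximalIdeal R)
    (hcard : (Nat.card ι : WithBot ℕ∞) ≤ ringKrullDim R) : IsRegularLocalRing R := by
  refine .of_spanFinrank_maximalIdeal_le R (le_trans ?_ hcard)
  have hrank : (maximalIdeal R).spanFinrank ≤ (Set.range s).ncard :=
    hs ▸ Submodule.spanFinrank_span_le_ncard_of_finite (Set.finite_range s)
  exact_mod_cast hrank.trans (Finite.card_range_le s)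

end RegularLocalRings

section Acyclicity

open Abelian Limits

variable {C : Type u} [Category.{v} C] [Abelian C]

lemma shortExact_factorThruImage_of_exact {S : ShortComplex C} (hS : S.Exact) [Mono S.f] :
    (ShortComplex.mk S.f (factorThruImage S.g)
      (comp_factorThruImage_eq_zero S.zero)).ShortExact where
  exact := ShortComplex.exact_of_g_is_cokernel _ hS.isColimitImage
  mono_f := ‹_›
  epi_g := inferInstanceAs (Epi (factorThruImage S.g))

lemma shortExact_image_ι_of_exact {S : ShortComplex C} (hS : S.Exact) [Epi S.g] :
    (ShortComplex.mk (Limits.image.ι S.f) S.g (image_ι_comp_eq_zero S.zero)).ShortExact where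
  exact := ShortComplex.exact_of_f_is_kernel _ hS.isLimitImage'
  mono_f := inferInstanceAs (Mono (Limits.image.ι S.f))
  epi_g := ‹_›

lemma exact_iCycles_toCycles (F : ChainComplex C ℕ) (j : ℕ) :
    (ShortComplex.mk (F.iCycles (j + 1)) (F.toCycles (j + 1) j)
      (by simp [← cancel_mono (F.iCycles j)])).Exact := by
  refine ShortComplex.exact_of_f_is_kernel _ (KernelFork.IsLimit.ofι' _ _ fun {A} g hg => ?_)
  have hd : g ≫ F.d (j + 1) j = 0 := by
    simpa using hg =≫ F.iCycles j
  exact ⟨F.liftCycles g j (by simp) hd, by simp⟩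

lemma exact_toCycles_homologyπ (F : ChainComplex C ℕ) (j : ℕ) :
    (ShortComplex.mk (F.toCycles (j + 1) j) (F.homologyπ j) (by simp)).Exact :=
  ShortComplex.exact_of_g_is_cokernel _ (F.homologyIsCokernel (j + 1) j (by simp))

variable [HasExt.{w} C]

/-- The grade of `M` with respect to `N` is at least `n`. For `N` the residue field of a
Noetherian local ring and `M` finitely generated this says that `M` has depth at least `n`. It is
expressed through the vanishing of `Ext`, so that zero objects have infinite grade. -/
def GradeGE (N M : C) (n : ℕ) : Prop := ∀ i < n, Subsingleton (Ext N M i)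

namespace GradeGE

variable {N M : C} {m n : ℕ}

lemma of_le (h : GradeGE N M n) (hmn : m ≤ n) : GradeGE N M m :=
  fun i hi => h i (hi.trans_le hmn)

lemma of_isZero (N : C) (hM : IsZero M) (n : ℕ) : GradeGE N M n :=
  fun i _ => AddCommGrpCat.subsingleton_of_isZero ((extFunctorObj N i).map_isZero hM)

lemma one_iff : GradeGE N M 1 ↔ Subsingleton (N ⟶ M) := by
  simp [GradeGE, Ext.homEquiv₀.subsingleton_congr]

lemma one_of_mono {M' : C} (f : M ⟶ M') [Mono f] (h : GradeGE N M' 1) : GradeGE N M 1 := by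
  rw [one_iff] at h ⊢
  exact ⟨fun g g' => by simp only [← cancel_mono f, eq_iff_true_of_subsingleton]⟩

variable {S : ShortComplex C}

lemma X₂_of_shortExact (hS : S.ShortExact) (h₁ : GradeGE N S.X₁ n) (h₃ : GradeGE N S.X₃ n) :
    GradeGE N S.X₂ n := fun i hi =>
  AddCommGrpCat.subsingleton_of_isZero <|
    (Ext.covariant_sequence_exact₂' N hS i).isZero_of_both_zeros
      ((AddCommGrpCat.isZero_of_iff_subsingleton.mpr (h₁ i hi)).eq_zero_of_src _)
      ((AddCommGrpCat.isZero_of_iff_subsingleton.mpr (h₃ i hi)).eq_zero_of_tgt _)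

lemma X₃_of_shortExact (hS : S.ShortExact) (h₁ : GradeGE N S.X₁ (n + 1)) (h₂ : GradeGE N S.X₂ n) :
    GradeGE N S.X₃ n := fun i hi =>
  AddCommGrpCat.subsingleton_of_isZero <|
    (Ext.covariant_sequence_exact₃' N hS i (i + 1) rfl).isZero_of_both_zeros
      ((AddCommGrpCat.isZero_of_iff_subsingleton.mpr (h₂ i hi)).eq_zero_of_src _)
      ((AddCommGrpCat.isZero_of_iff_subsingleton.mpr (h₁ (i + 1) (by lia))).eq_zero_of_tgt _)

end GradeGE

variable {N : C} {F : ChainComplex C ℕ}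

lemma isZero_homology_and_gradeGE_cycles_of_succ {j : ℕ} (hj : 1 ≤ j)
    (hX : GradeGE N (F.X j) 1) (hX' : GradeGE N (F.X (j + 1)) (j + 1))
    (hZ : GradeGE N (F.cycles (j + 1)) (j + 2))
    (hH : GradeGE N (F.homology j) 1 → IsZero (F.homology j)) :
    IsZero (F.homology j) ∧ GradeGE N (F.cycles j) (j + 1) := by
  have hB : GradeGE N (Limits.image (F.toCycles (j + 1) j)) (j + 1) :=
    .X₃_of_shortExact (shortExact_factorThruImage_of_exact (exact_iCycles_toCycles F j)) hZ hX'
  have hS := shortExact_image_ι_of_exact (exact_toCycles_homologyπ F j)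
  have hzero : IsZero (F.homology j) :=
    hH (.X₃_of_shortExact hS (hB.of_le (by lia)) (.one_of_mono (F.iCycles j) hX))
  exact ⟨hzero, .X₂_of_shortExact hS hB (.of_isZero N hzero _)⟩

theorem isZero_homology_of_gradeGE (hX : ∀ j, GradeGE N (F.X j) j)
    {d : ℕ} (hbounded : ∀ j, d < j → IsZero (F.X j))
    (hH : ∀ j, 1 ≤ j → GradeGE N (F.homology j) 1 → IsZero (F.homology j))
    (j : ℕ) (hj : 1 ≤ j) : IsZero (F.homology j) := by
  have htop : IsZero (F.cycles (j + d + 1)) :=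
    .of_mono (F.iCycles _) (hbounded _ (by lia))
  suffices IsZero (F.homology j) ∧ GradeGE N (F.cycles j) (j + 1) from this.1
  refine Nat.decreasingInduction' (n := j + d + 1)
    (P := fun k => IsZero (F.homology k) ∧ GradeGE N (F.cycles k) (k + 1))
    (fun k _ hjk ih => ?_) (by lia) ⟨htop.of_epi (F.homologyπ _), .of_isZero N htop _⟩
  have hk : 1 ≤ k := hj.trans hjk
  exact isZero_homology_and_gradeGE_cycles_of_succ hk ((hX k).of_le hk) (hX (k + 1)) ih.2
    (hH k hk)

end Acyclicity

section ModulesOverLocalRings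

open Abelian Limits IsLocalRing RingTheory.Sequence

variable {R : Type u} [CommRing R]

lemma gradeGE_of_isWeaklyRegular [Small.{v} R] {N M : ModuleCat.{v} R} {rs : List R}
    (hrs : ∀ r ∈ rs, r ∈ Module.annihilator R N) (h : IsWeaklyRegular M rs) :
    GradeGE N M rs.length := by
  induction rs generalizing M with
  | nil => simp [GradeGE]
  | cons r rs ih =>
    rw [isWeaklyRegular_cons_iff] at h
    rw [List.forall_mem_cons] at hrs
    rintro (_ | i) hi
    · have := IsSMulRegular.linearMap_subsingleton_of_mem_annihilator h.1 hrs.1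
      exact (Ext.addEquiv₀.trans ModuleCat.homAddEquiv).subsingleton
    have hquot : Subsingleton (Ext N (ModuleCat.of R (QuotSMulTop r M)) i) :=
      ih hrs.2 h.2 i (by simpa using hi)
    have hmono : Mono (AddCommGrpCat.ofHom
        ((Ext.mk₀ (r • 𝟙 M)).postcomp N (add_zero (i + 1)))) :=
      (Ext.covariant_sequence_exact₁' N h.1.smulShortComplex_shortExact i (i + 1) rfl).mono_g
        ((AddCommGrpCat.isZero_of_iff_subsingleton.mpr hquot).eq_zero_of_src _)
    exact AddCommGrpCat.subsingleton_of_isZero <| IsZero.of_mono_eq_zero _ <|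
      Ext.postcomp_smul_id_eq_zero_of_mem_annihilator hrs.1 (i + 1)

lemma subsingleton_of_subsingleton_linearMap_of_isSimpleModule [IsLocalRing R]
    {S M : Type*} [AddCommGroup S] [Module R S] [IsSimpleModule R S]
    [AddCommGroup M] [Module R M] [IsAtomic (Submodule R M)] [Subsingleton (S →ₗ[R] M)] :
    Subsingleton M := by
  by_contra hM
  rw [not_subsingleton_iff_nontrivial] at hM
  obtain ⟨P, hP, -⟩ := (eq_bot_or_exists_atom_le (⊤ : Submodule R M)).resolve_left top_ne_bot
  rw [← isSimpleModule_iff_isAtom] at hP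
  obtain ⟨I, hI, ⟨eS⟩⟩ := isSimpleModule_iff_quot_maximal.mp ‹IsSimpleModule R S›
  obtain ⟨J, hJ, ⟨eP⟩⟩ := isSimpleModule_iff_quot_maximal.mp hP
  obtain rfl : I = J := (eq_maximalIdeal hI).trans (eq_maximalIdeal hJ).symm
  have hzero : P.subtype ∘ₗ (eS.trans eP.symm).toLinearMap = 0 := Subsingleton.elim _ _
  have := IsSimpleModule.nontrivial R P
  obtain ⟨y, hy⟩ := exists_ne (0 : P)
  obtain ⟨x, rfl⟩ := (eS.trans eP.symm).surjective y
  exact hy (Subtype.ext (LinearMap.congr_fun hzero x))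

lemma isZero_of_gradeGE_one_of_isSimpleModule [IsLocalRing R] [Small.{v} R]
    {N M : ModuleCat.{v} R} [IsSimpleModule R N] [IsAtomic (Submodule R M)] (h : GradeGE N M 1) :
    IsZero M := by
  have : Subsingleton (N ⟶ M) := GradeGE.one_iff.mp h
  have : Subsingleton (N →ₗ[R] M) := ModuleCat.homEquiv.symm.subsingleton
  have := subsingleton_of_subsingleton_linearMap_of_isSimpleModule (R := R) (S := N) (M := M)
  exact ModuleCat.isZero_of_subsingleton M

theorem bounded_free_complex_with_finite_length_homology_is_exact_in_positive_degrees_general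
    [IsLocalRing R] [Small.{v} R] (d : ℕ)
    (F : ChainComplex (ModuleCat.{v} R) ℕ)
    (hdepth : ∀ j ≤ d, ∃ rs : List R, j ≤ rs.length ∧ (∀ r ∈ rs, r ∈ maximalIdeal R) ∧
      IsWeaklyRegular (F.X j) rs)
    (hbounded : ∀ j, d < j → Subsingleton (F.X j))
    (hatomic : ∀ j, 1 ≤ j → IsAtomic (Submodule R (F.homology j))) :
    ∀ j, 1 ≤ j → Subsingleton (F.homology j) := by
  let N : ModuleCat.{v} R := .of R (Shrink.{v} (R ⧸ maximalIdeal R))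
  have : IsSimpleModule R N :=
    isSimpleModule_iff_quot_maximal.mpr ⟨_, maximalIdeal.isMaximal R, ⟨Shrink.linearEquiv R _⟩⟩
  have hann : Module.annihilator R N = maximalIdeal R :=
    eq_maximalIdeal (IsSimpleModule.annihilator_isMaximal (R := R) (M := N))
  have hzero : ∀ j, d < j → IsZero (F.X j) := fun j hj =>
    have := hbounded j hj
    ModuleCat.isZero_of_subsingleton _
  have hX : ∀ j, GradeGE N (F.X j) j := fun j => by
    obtain hj | hj := le_or_gt j d
    · obtain ⟨rs, hlen, hrs, hreg⟩ := hdepth j hj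
      exact (gradeGE_of_isWeaklyRegular (hann ▸ hrs) hreg).of_le hlen
    · exact .of_isZero N (hzero j hj) j
  exact fun j hj => ModuleCat.subsingleton_of_isZero <|
    isZero_homology_of_gradeGE hX hzero
      (fun k hk h => have := hatomic k hk; isZero_of_gradeGE_one_of_isSimpleModule h) j hj

end ModulesOverLocalRings

theorem bounded_free_complex_with_finite_length_homology_is_exact_in_positive_degrees
    (R : Type) [CommRing R] [IsNoetherianRing R] [IsLocalRing R]
    (d : ℕ) (hd : 1 ≤ d)
    -- `R` has Krull dimension `d` …
    (hdim : ringKrullDim R = d)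
    -- … and is regular: the maximal ideal is generated by `d` elements
    (hreg : ∃ s : Fin d → R, Ideal.span (Set.range s) = IsLocalRing.maximalIdeal R)
    -- a chain complex of finitely generated free modules concentrated in degrees `0 … d`
    (F : ChainComplex (ModuleCat.{0} R) ℕ)
    (hfree : ∀ j, Module.Free R (F.X j)) (hfg : ∀ j, Module.Finite R (F.X j))
    (hbounded : ∀ j, d < j → Subsingleton (F.X j))
    -- all homology modules have finite length
    (hfl : ∀ j, IsFiniteLength R (F.homology j)) :
    ∀ j, 1 ≤ j → Subsingleton (F.homology j) := by
  obtain ⟨s, hs⟩ := hreg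
  have : IsRegularLocalRing R :=
    isRegularLocalRing_of_span_range_eq_maximalIdeal hs (by simp [hdim])
  obtain ⟨rs, hlen, hrs, hrsreg⟩ := exists_isWeaklyRegular_of_isRegularLocalRing hdim
  refine bounded_free_complex_with_finite_length_homology_is_exact_in_positive_degrees_general d F
    (fun j hj => ⟨rs, hlen ▸ hj, hrs, isWeaklyRegular_of_flat hrsreg⟩) hbounded fun j _ => ?_
  have : IsArtinian R (F.homology j) := (isFiniteLength_iff_isNoetherian_isArtinian.mp (hfl j)).2
  infer_instance
end
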